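/- Smoothness across knots: let ξ be a knot vector, p ≥ 1 a degree, i an index, t a real number, and 1 ≤ k ≤ p. Suppose exactly k of the knots ξ i, ξ (i+1), …, ξ (i+p+1) are equal to t (i.e. t is a knot of multiplicity k for the basis function N i p). Then there exists an open neighborhood of t on which N i p is (p − k)-times continuously differentiable. -/

import Mathlib

/-- Cox–de Boor B-spline basis functions, with the convention that any term whose
denominator vanishes is taken to be `0`. -/
noncomputable def bspline (ξ : ℕ → ℝ) : ℕ → ℕ → ℝ → ℝ
  | i, 0, x => if ξ i ≤ x ∧ x < ξ (i + 1) then 1 else 0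
  | i, p + 1, x =>
      (if ξ (i + p + 1) - ξ i = 0 then 0
        else (x - ξ i) / (ξ (i + p + 1) - ξ i) * bspline ξ i p x) +
      (if ξ (i + p + 2) - ξ (i + 1) = 0 then 0
        else (ξ (i + p + 2) - x) / (ξ (i + p + 2) - ξ (i + 1)) * bspline ξ (i + 1) p x)


/-!
Near `t` the function `N i p` coincides on the left and on the right of `t` with polynomials that
satisfy the same Cox–de Boor recursion, started from constants in degree `0`. Differentiating such
a polynomial lowers its degree, so by the formula for derivatives of B-splines the `m`-th
derivatives of the two polynomials agree at `t` as soon as the values at `t` of the polynomials of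
degree `p - m` agree. The values of the degree `q` polynomials differ at `t` by
`[ξ i = t = ξ (i + q)] - [ξ (i + 1) = t = ξ (i + q + 1)]`, which vanishes unless `q + 1`
consecutive knots equal `t`; if `t` has multiplicity `k`, this is impossible for `q ≥ k`, that is,
for `m ≤ p - k`.
-/

open Filter Set Topology

section Gluing

variable {E : Type*} [NormedAddCommGroup E] [NormedSpace ℝ E] {f g : ℝ → E} {t : ℝ}

theorem hasDerivAt_ite_lt {f' g' : ℝ → E} (hf : ∀ x, HasDerivAt f (f' x) x)
    (hg : ∀ x, HasDerivAt g (g' x) x) (h : f t = g t) (h' : f' t = g' t) (x : ℝ) :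
    HasDerivAt (fun y ↦ if y < t then f y else g y) (if x < t then f' x else g' x) x := by
  rcases lt_trichotomy x t with hx | rfl | hx
  · rw [if_pos hx]
    refine (hf x).congr_of_eventuallyEq ?_
    filter_upwards [Iio_mem_nhds hx] with y hy using if_pos hy
  · have left : HasDerivWithinAt (fun y ↦ if y < x then f y else g y) (g' x) (Iio x) x :=
      h' ▸ (hf x).hasDerivWithinAt.congr (fun y hy ↦ if_pos hy) (by simp [h])
    have right : HasDerivWithinAt (fun y ↦ if y < x then f y else g y) (g' x) (Ici x) x :=
      (hg x).hasDerivWithinAt.congr (fun y hy ↦ if_neg (not_lt.2 hy)) (by simp)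
    simpa using left.union right
  · rw [if_neg hx.not_gt]
    refine (hg x).congr_of_eventuallyEq ?_
    filter_upwards [Ioi_mem_nhds hx] with y hy using if_neg (not_lt.2 (le_of_lt hy))

theorem contDiff_ite_lt {n : ℕ} (hf : ContDiff ℝ n f) (hg : ContDiff ℝ n g)
    (h : ∀ m ≤ n, iteratedDeriv m f t = iteratedDeriv m g t) :
    ContDiff ℝ n fun x ↦ if x < t then f x else g x := by
  induction n generalizing f g with
  | zero =>
    have hfg : ∀ x, t = x → g x = f x := by
      rintro x rfl
      simpa using (h 0 le_rfl).symm
    simp only [← not_le, ite_not]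
    exact contDiff_zero.2 <|
      hg.continuous.if_le hf.continuous continuous_const continuous_id hfg
  | succ n ih =>
    push_cast at hf hg ⊢
    obtain ⟨df, -, hf'⟩ := contDiff_succ_iff_deriv.1 hf
    obtain ⟨dg, -, hg'⟩ := contDiff_succ_iff_deriv.1 hg
    have hd := hasDerivAt_ite_lt (fun x ↦ (df x).hasDerivAt) (fun x ↦ (dg x).hasDerivAt)
      (t := t) (by simpa using h 0 (by omega)) (by simpa using h 1 (by omega))
    refine contDiff_succ_iff_deriv.2 ⟨fun x ↦ (hd x).differentiableAt, by simp, ?_⟩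
    rw [funext fun x ↦ (hd x).deriv]
    refine ih hf' hg' fun m hm ↦ ?_
    simpa only [iteratedDeriv_succ'] using h (m + 1) (by omega)

end Gluing

section OneSided

variable {α : Type*} [TopologicalSpace α] [LinearOrder α] [OrderClosedTopology α]

theorem eventually_nhdsLT_lt_iff_le (a t : α) : ∀ᶠ x in 𝓝[<] t, x < a ↔ t ≤ a := by
  rcases lt_or_ge a t with h | h
  · filter_upwards [Ioo_mem_nhdsLT h] with x hx
    exact iff_of_false hx.1.not_gt h.not_ge
  · filter_upwards [self_mem_nhdsWithin] with x hx
    exact iff_of_true (lt_of_lt_of_le hx h) h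

theorem eventually_nhdsGE_lt_iff_lt (a t : α) : ∀ᶠ x in 𝓝[≥] t, x < a ↔ t < a := by
  rcases lt_or_ge t a with h | h
  · filter_upwards [Ico_mem_nhdsGE h] with x hx
    exact iff_of_true hx.2 h
  · filter_upwards [self_mem_nhdsWithin] with x hx
    exact iff_of_false (h.trans hx).not_gt h.not_gt

end OneSided

theorem eq_of_monotone_of_le_of_le {α β : Type*} [Preorder α] [PartialOrder β] {f : α → β}
    (hf : Monotone f) {a b x : α} {y : β} (ha : f a = y) (hb : f b = y) (hax : a ≤ x)
    (hxb : x ≤ b) : f x = y :=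
  (ordConnected_singleton.preimage_mono hf).out ha hb ⟨hax, hxb⟩

/-- The polynomial functions obtained from the Cox–de Boor recursion with the constants `c j` as
functions of degree `0`; they are the polynomial pieces of B-splines. Lean's `x / 0 = 0` accounts
for the terms with zero denominator. -/
noncomputable def coxDeBoor (ξ c : ℕ → ℝ) : ℕ → ℕ → ℝ → ℝ
  | i, 0, _ => c i
  | i, p + 1, x =>
      (x - ξ i) / (ξ (i + p + 1) - ξ i) * coxDeBoor ξ c i p x +
      (ξ (i + p + 2) - x) / (ξ (i + p + 2) - ξ (i + 1)) * coxDeBoor ξ c (i + 1) p x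

/-- The polynomial piece of the B-spline `bspline ξ i p` that ends at `t`: in degree `0`, the
left limit at `t` of the indicator function of `[ξ j, ξ (j + 1))`. -/
noncomputable def leftPiece (ξ : ℕ → ℝ) (t : ℝ) : ℕ → ℕ → ℝ → ℝ :=
  coxDeBoor ξ fun j ↦ if ξ j < t ∧ t ≤ ξ (j + 1) then 1 else 0

/-- The polynomial piece of the B-spline `bspline ξ i p` that starts at `t`: in degree `0`, the
value at `t` of the indicator function of `[ξ j, ξ (j + 1))`. -/
noncomputable def rightPiece (ξ : ℕ → ℝ) (t : ℝ) : ℕ → ℕ → ℝ → ℝ :=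
  coxDeBoor ξ fun j ↦ if ξ j ≤ t ∧ t < ξ (j + 1) then 1 else 0

variable {ξ : ℕ → ℝ}

section LocalPieces

theorem eventually_bspline_eq_coxDeBoor {c : ℕ → ℝ} {l : Filter ℝ}
    (h : ∀ j, ∀ᶠ x in l, bspline ξ j 0 x = c j) (i p : ℕ) :
    ∀ᶠ x in l, bspline ξ i p x = coxDeBoor ξ c i p x := by
  induction p generalizing i with
  | zero => exact h i
  | succ p ih =>
    filter_upwards [ih i, ih (i + 1)] with x h₁ h₂
    simp only [bspline, coxDeBoor, h₁, h₂]
    split_ifs <;> simp [*]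

theorem eventually_nhdsLT_bspline_eq_leftPiece (t : ℝ) (i p : ℕ) :
    ∀ᶠ x in 𝓝[<] t, bspline ξ i p x = leftPiece ξ t i p x := by
  refine eventually_bspline_eq_coxDeBoor (fun j ↦ ?_) i p
  filter_upwards [eventually_nhdsLT_lt_iff_le (ξ j) t, eventually_nhdsLT_lt_iff_le (ξ (j + 1)) t]
    with x h₁ h₂
  simp only [bspline, ← not_lt (b := ξ j), ← not_le (b := ξ j), h₁, h₂]

theorem eventually_nhdsGE_bspline_eq_rightPiece (t : ℝ) (i p : ℕ) :
    ∀ᶠ x in 𝓝[≥] t, bspline ξ i p x = rightPiece ξ t i p x := by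
  refine eventually_bspline_eq_coxDeBoor (fun j ↦ ?_) i p
  filter_upwards [eventually_nhdsGE_lt_iff_lt (ξ j) t, eventually_nhdsGE_lt_iff_lt (ξ (j + 1)) t]
    with x h₁ h₂
  simp only [bspline, ← not_lt (b := ξ j), h₁, h₂]

theorem bspline_eventuallyEq_ite_lt (t : ℝ) (i p : ℕ) :
    bspline ξ i p =ᶠ[𝓝 t] fun x ↦ if x < t then leftPiece ξ t i p x else rightPiece ξ t i p x := by
  rw [EventuallyEq, ← nhdsLT_sup_nhdsGE, eventually_sup]
  constructor
  · filter_upwards [eventually_nhdsLT_bspline_eq_leftPiece t i p, self_mem_nhdsWithin]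
      with x h hx
    rw [h, if_pos (mem_Iio.1 hx)]
  · filter_upwards [eventually_nhdsGE_bspline_eq_rightPiece t i p, self_mem_nhdsWithin]
      with x h hx
    rw [h, if_neg (not_lt.2 hx)]

end LocalPieces

section Derivatives

theorem hasDerivAt_coxDeBoor_succ_of_hasDerivAt {c : ℕ → ℝ} {i p : ℕ} {x a b : ℝ}
    (ha : HasDerivAt (coxDeBoor ξ c i p) a x) (hb : HasDerivAt (coxDeBoor ξ c (i + 1) p) b x) :
    HasDerivAt (coxDeBoor ξ c i (p + 1))
      (coxDeBoor ξ c i p x / (ξ (i + p + 1) - ξ i) -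
        coxDeBoor ξ c (i + 1) p x / (ξ (i + p + 2) - ξ (i + 1)) +
        ((x - ξ i) / (ξ (i + p + 1) - ξ i) * a +
          (ξ (i + p + 2) - x) / (ξ (i + p + 2) - ξ (i + 1)) * b)) x := by
  have h₁ := (((hasDerivAt_id' x).sub_const (ξ i)).div_const (ξ (i + p + 1) - ξ i)).mul ha
  have h₂ := (((hasDerivAt_id' x).const_sub (ξ (i + p + 2))).div_const
    (ξ (i + p + 2) - ξ (i + 1))).mul hb
  exact (h₁.add h₂).congr_deriv (by ring)

theorem contDiff_coxDeBoor (c : ℕ → ℝ) (n : WithTop ℕ∞) (i p : ℕ) :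
    ContDiff ℝ n (coxDeBoor ξ c i p) := by
  induction p generalizing i with
  | zero => exact contDiff_const
  | succ p ih =>
    exact (((contDiff_id.sub contDiff_const).div_const _).mul (ih i)).add
      (((contDiff_const.sub contDiff_id).div_const _).mul (ih (i + 1)))

theorem coxDeBoor_weight_exchange {K : Type*} [Field K] [LinearOrder K] [IsStrictOrderedRing K]
    {a b c d : K} (hab : a ≤ b) (hbc : b ≤ c) (hcd : c ≤ d) (x : K) :
    ((d - x) / (d - b) - (x - a) / (c - a)) / (c - b) =
      ((c - x) / (c - a) - (x - b) / (d - b)) / (c - b) := by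
  -- The common denominator `c - b` is not cancelled, so that with `x / 0 = 0` the identity also
  -- covers `a = b = c` and `b = c = d`.
  rcases hbc.eq_or_lt with rfl | hbc
  · simp
  · have hca : c - a ≠ 0 := (sub_pos.2 (hab.trans_lt hbc)).ne'
    have hdb : d - b ≠ 0 := (sub_pos.2 (hbc.trans_le hcd)).ne'
    congr 1
    field_simp
    ring

theorem hasDerivAt_coxDeBoor (hξ : Monotone ξ) (c : ℕ → ℝ) (i p : ℕ) (x : ℝ) :
    HasDerivAt (coxDeBoor ξ c i (p + 1))
      ((p + 1) * (coxDeBoor ξ c i p x / (ξ (i + p + 1) - ξ i) -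
        coxDeBoor ξ c (i + 1) p x / (ξ (i + p + 2) - ξ (i + 1)))) x := by
  induction p generalizing i with
  | zero =>
    have const (j : ℕ) : HasDerivAt (coxDeBoor ξ c j 0) 0 x := hasDerivAt_const x (c j)
    refine (hasDerivAt_coxDeBoor_succ_of_hasDerivAt (const i) (const (i + 1))).congr_deriv ?_
    simp
  | succ p ih =>
    refine (hasDerivAt_coxDeBoor_succ_of_hasDerivAt (ih i) (ih (i + 1))).congr_deriv ?_
    have exchange := coxDeBoor_weight_exchange (hξ (by omega : i ≤ i + 1))
      (hξ (by omega : i + 1 ≤ i + p + 2)) (hξ (by omega : i + p + 2 ≤ i + p + 3)) x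
    simp only [coxDeBoor, show i + (p + 1) + 1 = i + p + 2 by ring,
      show i + (p + 1) + 2 = i + p + 3 by ring, show i + 1 + p + 1 = i + p + 2 by ring,
      show i + 1 + p + 2 = i + p + 3 by ring, Nat.cast_succ]
    linear_combination (p + 1) * coxDeBoor ξ c (i + 1) p x * exchange

theorem iteratedDeriv_coxDeBoor_congr (hξ : Monotone ξ) {c d : ℕ → ℝ} {i q n : ℕ} {t : ℝ}
    (h : ∀ j ≤ n, coxDeBoor ξ c (i + j) q t = coxDeBoor ξ d (i + j) q t) :
    iteratedDeriv n (coxDeBoor ξ c i (q + n)) t = iteratedDeriv n (coxDeBoor ξ d i (q + n)) t := by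
  induction n generalizing i with
  | zero => simpa using h 0 le_rfl
  | succ n ih =>
    have smooth (e : ℕ → ℝ) (j : ℕ) (a : ℝ) :
        ContDiffAt ℝ n (fun x ↦ coxDeBoor ξ e j (q + n) x / a) t :=
      ((contDiff_coxDeBoor e n j (q + n)).div_const a).contDiffAt
    have expand (e : ℕ → ℝ) : iteratedDeriv (n + 1) (coxDeBoor ξ e i (q + n + 1)) t =
        ((q + n : ℕ) + 1) *
          (iteratedDeriv n (coxDeBoor ξ e i (q + n)) t / (ξ (i + (q + n) + 1) - ξ i) -
          iteratedDeriv n (coxDeBoor ξ e (i + 1) (q + n)) t /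
            (ξ (i + (q + n) + 2) - ξ (i + 1))) := by
      rw [iteratedDeriv_succ', funext fun x ↦ (hasDerivAt_coxDeBoor hξ e i (q + n) x).deriv,
        iteratedDeriv_const_mul_field, iteratedDeriv_fun_sub (smooth e _ _) (smooth e _ _),
        iteratedDeriv_div_const, iteratedDeriv_div_const]
    rw [← add_assoc, expand c, expand d, ih fun j hj ↦ h j (by omega),
      ih fun j hj ↦ by simpa only [add_right_comm, add_assoc] using h (j + 1) (by omega)]

end Derivatives

section Jump

theorem rightPiece_sub_leftPiece (hξ : Monotone ξ) (t : ℝ) (i q : ℕ) :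
    rightPiece ξ t i q t - leftPiece ξ t i q t =
      (if ξ i = t ∧ ξ (i + q) = t then 1 else 0) -
        (if ξ (i + 1) = t ∧ ξ (i + q + 1) = t then 1 else 0) := by
  induction q generalizing i with
  | zero =>
    have := hξ (Nat.le_add_right i 1)
    simp only [rightPiece, leftPiece, coxDeBoor]
    grind
  | succ q ih =>
    have first_run (h : ξ i = t) (h' : ξ (i + q + 1) = t) : ξ (i + 1) = t :=
      eq_of_monotone_of_le_of_le hξ h h' (by omega) (by omega)
    have last_run (h : ξ (i + 1) = t) (h' : ξ (i + q + 2) = t) : ξ (i + q + 1) = t :=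
      eq_of_monotone_of_le_of_le hξ h h' (by omega) (by omega)
    have first_term : (t - ξ i) / (ξ (i + q + 1) - ξ i) *
        (rightPiece ξ t i q t - leftPiece ξ t i q t) =
          (if ξ i = t ∧ ξ (i + q + 1) = t then 1 else 0) -
            (if ξ (i + 1) = t ∧ ξ (i + q + 1) = t then 1 else 0) := by
      rw [ih i]
      by_cases h : ξ i = t
      · grind
      · have : t - ξ i ≠ 0 := sub_ne_zero.2 (Ne.symm h)
        split_ifs <;> simp_all
    have last_term : (ξ (i + q + 2) - t) / (ξ (i + q + 2) - ξ (i + 1)) *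
        (rightPiece ξ t (i + 1) q t - leftPiece ξ t (i + 1) q t) =
          (if ξ (i + 1) = t ∧ ξ (i + q + 1) = t then 1 else 0) -
            (if ξ (i + 1) = t ∧ ξ (i + q + 2) = t then 1 else 0) := by
      rw [ih (i + 1), add_right_comm i 1 q]
      by_cases h : ξ (i + q + 2) = t
      · grind
      · have : ξ (i + q + 2) - t ≠ 0 := sub_ne_zero.2 h
        split_ifs <;> simp_all
    simp only [rightPiece, leftPiece, coxDeBoor] at first_term last_term ⊢
    linear_combination first_term + last_term

theorem leftPiece_eq_rightPiece (hξ : Monotone ξ) {t : ℝ} {i q : ℕ}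
    (h : ¬(ξ i = t ∧ ξ (i + q) = t)) (h' : ¬(ξ (i + 1) = t ∧ ξ (i + q + 1) = t)) :
    leftPiece ξ t i q t = rightPiece ξ t i q t := by
  have jump := rightPiece_sub_leftPiece hξ t i q
  rw [if_neg h, if_neg h', sub_self] at jump
  exact (sub_eq_zero.1 jump).symm

end Jump

theorem contDiffAt_bspline (hξ : Monotone ξ) {t : ℝ} {i k n : ℕ}
    (hrun : ∀ j ≤ n + 1, ¬(ξ (i + j) = t ∧ ξ (i + j + k) = t)) :
    ContDiffAt ℝ n (bspline ξ i (n + k)) t := by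
  have no_long_run {j q : ℕ} (hj : j ≤ n + 1) (hq : k ≤ q) :
      ¬(ξ (i + j) = t ∧ ξ (i + j + q) = t) := fun ⟨h, h'⟩ ↦
    hrun j hj ⟨h, eq_of_monotone_of_le_of_le hξ h h' (by omega) (by omega)⟩
  have deriv_eq (m : ℕ) (hm : m ≤ n) : iteratedDeriv m (leftPiece ξ t i (n + k)) t =
      iteratedDeriv m (rightPiece ξ t i (n + k)) t := by
    rw [show n + k = n + k - m + m by omega]
    refine iteratedDeriv_coxDeBoor_congr hξ fun j hj ↦
      leftPiece_eq_rightPiece hξ (no_long_run (by omega) (by omega)) ?_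
    simpa only [add_assoc, add_left_comm, add_comm] using
      no_long_run (j := j + 1) (q := n + k - m) (by omega) (by omega)
  have glued := contDiff_ite_lt (contDiff_coxDeBoor _ n i (n + k))
    (contDiff_coxDeBoor _ n i (n + k)) deriv_eq
  exact glued.contDiffAt.congr_of_eventuallyEq (bspline_eventuallyEq_ite_lt t i (n + k))

theorem not_knot_run_of_card_le (hξ : Monotone ξ) {t : ℝ} {i j k N : ℕ}
    (hcard : (Finset.filter (fun m ↦ ξ (i + m) = t) (Finset.range N)).card ≤ k)
    (hj : j + k < N) : ¬(ξ (i + j) = t ∧ ξ (i + j + k) = t) := by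
  rintro ⟨h, h'⟩
  have hsub : Finset.Icc j (j + k) ⊆
      Finset.filter (fun m ↦ ξ (i + m) = t) (Finset.range N) := fun m hm ↦ by
    obtain ⟨hjm, hmk⟩ := Finset.mem_Icc.1 hm
    exact Finset.mem_filter.2 ⟨Finset.mem_range.2 (by omega),
      eq_of_monotone_of_le_of_le hξ h h' (by omega) (by omega)⟩
  have := (Finset.card_le_card hsub).trans hcard
  rw [Nat.card_Icc] at this
  omega

/-- Smoothness across knots: if exactly `k` of the knots `ξ i, …, ξ (i+p+1)` equal `t`
(with `1 ≤ k ≤ p`), then `N_{i,p}` is `(p − k)`-times continuously differentiable on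
some open neighborhood of `t`. -/
theorem bspline_smoothness_at_knot (ξ : ℕ → ℝ) (hξ : ∀ i, ξ i ≤ ξ (i + 1))
    (p : ℕ) (hp : 1 ≤ p) (i : ℕ) (t : ℝ) (k : ℕ) (hk₁ : 1 ≤ k) (hk₂ : k ≤ p)
    (hmult : (Finset.filter (fun m => ξ (i + m) = t) (Finset.range (p + 2))).card = k) :
    ∃ U : Set ℝ, IsOpen U ∧ t ∈ U ∧
      ContDiffOn ℝ ((p - k : ℕ) : ℕ∞) (bspline ξ i p) U := by
  have hmono : Monotone ξ := monotone_nat_of_le_succ hξ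
  obtain ⟨n, rfl⟩ := Nat.exists_eq_add_of_le' hk₂
  have smooth : ContDiffAt ℝ n (bspline ξ i (n + k)) t :=
    contDiffAt_bspline hmono fun j hj ↦ not_knot_run_of_card_le hmono hmult.le (by omega)
  obtain ⟨U, hU, htU, h⟩ := smooth.contDiffWithinAt.contDiffOn' (s := univ) le_rfl (by simp)
  exact ⟨U, hU, htU, by simpa using h⟩
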